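/- Let φ: S_{m−1} → S_m be defined by φ(π_1π_2⋯π_{m−1}) = (π_1+1)(π_2+1)⋯(π_{m−1}+1)·1. For every n ≥ 4, the set S_n(123;312) of permutations of {1,…,n} avoiding 123 and containing 312 exactly once equals {φ(π) : π ∈ S_{n−1}(123;312)} ∪ {3 1 n (n−1) (n−2) ⋯ 5 4 2, (n−2) (n−3) ⋯ 3 2 n 1 (n−1)}, the two listed words being the permutations 3,1,n,n−1,n−2,…,5,4,2 and n−2,n−3,…,3,2,n,1,n−1. -/

import Mathlib

/-- Number of occurrences of the pattern `α ∈ S_k` in the permutation `π ∈ S_n`: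
the number of strictly increasing choices of `k` indices such that the corresponding
subword of `π` is order-isomorphic to `α`. -/
noncomputable def occCount {k n : ℕ} (α : Equiv.Perm (Fin k)) (π : Equiv.Perm (Fin n)) : ℕ :=
  Nat.card {f : Fin k → Fin n // StrictMono f ∧ ∀ a b : Fin k, α a < α b ↔ π (f a) < π (f b)}

/-- `π` avoids the pattern `α`. -/
def avoids {k n : ℕ} (α : Equiv.Perm (Fin k)) (π : Equiv.Perm (Fin n)) : Prop :=
  occCount α π = 0

/-- `π` contains the pattern `α` exactly once. -/
def containsOnce {k n : ℕ} (α : Equiv.Perm (Fin k)) (π : Equiv.Perm (Fin n)) : Prop :=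
  occCount α π = 1

/-- The pattern `123` (as a permutation of `Fin 3`, 0-indexed). -/
def p123 : Equiv.Perm (Fin 3) := ⟨![0,1,2], ![0,1,2], by decide, by decide⟩
/-- The pattern `132`. -/
def p132 : Equiv.Perm (Fin 3) := ⟨![0,2,1], ![0,2,1], by decide, by decide⟩
/-- The pattern `213`. -/
def p213 : Equiv.Perm (Fin 3) := ⟨![1,0,2], ![1,0,2], by decide, by decide⟩
/-- The pattern `231`. -/
def p231 : Equiv.Perm (Fin 3) := ⟨![1,2,0], ![2,0,1], by decide, by decide⟩
/-- The pattern `312`. -/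
def p312 : Equiv.Perm (Fin 3) := ⟨![2,0,1], ![1,2,0], by decide, by decide⟩
/-- The pattern `321`. -/
def p321 : Equiv.Perm (Fin 3) := ⟨![2,1,0], ![2,1,0], by decide, by decide⟩

/-- `s_n(α;β)`: the number of permutations of `{1,…,n}` that avoid `α` and contain `β`
exactly once. -/
noncomputable def sAvoidContain (α β : Equiv.Perm (Fin 3)) (n : ℕ) : ℕ :=
  Nat.card {π : Equiv.Perm (Fin n) // avoids α π ∧ containsOnce β π}

/-- `s_n(∅;{α,β})`: the number of permutations of `{1,…,n}` that contain each of `α` and `β`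
exactly once. -/
noncomputable def sContainBoth (α β : Equiv.Perm (Fin 3)) (n : ℕ) : ℕ :=
  Nat.card {π : Equiv.Perm (Fin n) // containsOnce α π ∧ containsOnce β π}

/-- `φ : S_m → S_{m+1}` appends a new smallest element at the end:
`φ(π₁…π_m) = (π₁+1)(π₂+1)⋯(π_m+1)·1`. -/
def phi {m : ℕ} (π : Equiv.Perm (Fin m)) : Equiv.Perm (Fin (m + 1)) where
  toFun i := Fin.lastCases 0 (fun j => (π j).succ) i
  invFun v := Fin.cases (Fin.last m) (fun j => (π.symm j).castSucc) v
  left_inv i := by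
    induction i using Fin.lastCases with
    | last => simp
    | cast j => simp
  right_inv v := by
    induction v using Fin.cases with
    | zero => simp
    | succ j => simp

/-- `S_n(α;β)`: the set of permutations of `{1,…,n}` avoiding `α` and containing `β`
exactly once. -/
def SnAvoidContain (α β : Equiv.Perm (Fin 3)) (n : ℕ) : Set (Equiv.Perm (Fin n)) :=
  {π | avoids α π ∧ containsOnce β π}

/-- `S_n(∅;{α,β})`: the set of permutations of `{1,…,n}` containing each of `α` and `β`
exactly once. -/
def SnContainBoth (α β : Equiv.Perm (Fin 3)) (n : ℕ) : Set (Equiv.Perm (Fin n)) :=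
  {π | containsOnce α π ∧ containsOnce β π}

/-- `π` is the permutation whose one-line word (1-indexed positions, values in `{1,…,n}`)
is given by `w`. -/
def hasWord {n : ℕ} (π : Equiv.Perm (Fin n)) (w : ℕ → ℕ) : Prop :=
  ∀ j : Fin n, (π j : ℕ) + 1 = w ((j : ℕ) + 1)

/-!
The permutations ending in their minimum are the image of `φ`, and `φ` neither creates nor destroys
occurrences of a pattern that does not end in its smallest letter.

Let `σ ∈ S_n` avoid `123` and have exactly one occurrence of `312`, at positions `a < b < c`, and
suppose that `σ` does not end in its minimum. Any other placement of the minimum or of `c` would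
produce a `123` or a second `312`, so the minimum is at `b` and `c` is the last position. Then every
entry before `b` is smaller than every entry after `b`, except that `σ a > σ c`; hence `a`
immediately precedes `b`, and the entries before `a` decrease, as do those after `b`. An entry
strictly between positions `b` and `c` forces `a` to be the first position, which gives
`3 1 n (n-1) ⋯ 4 2`; without one, `σ` is `(n-2) ⋯ 2 n 1 (n-1)`.
-/

open Equiv (Perm)

section Occurrence

variable {k n : ℕ} {α : Perm (Fin k)} {π : Perm (Fin n)}

/-- The positions `f 0 < f 1 < ⋯` carry an occurrence of the pattern `α` in `π`; these are the
maps counted by `occCount`. -/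
def IsOccurrence (α : Perm (Fin k)) (π : Perm (Fin n)) (f : Fin k → Fin n) : Prop :=
  StrictMono f ∧ ∀ a b, α a < α b ↔ π (f a) < π (f b)

lemma avoids_iff_forall_not_isOccurrence : avoids α π ↔ ∀ f, ¬ IsOccurrence α π f := by
  rw [avoids, occCount, Finite.card_eq_zero_iff, isEmpty_subtype]
  rfl

lemma containsOnce_iff_existsUnique_isOccurrence :
    containsOnce α π ↔ ∃! f, IsOccurrence α π f := by
  rw [containsOnce, occCount, Nat.card_eq_one_iff_exists]
  simp only [Subtype.exists, Subtype.forall, Subtype.mk.injEq, exists_prop]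
  rfl

lemma isOccurrence_iff_strictMono_comp_symm {f : Fin k → Fin n} :
    IsOccurrence α π f ↔ StrictMono f ∧ StrictMono (π ∘ f ∘ α.symm) := by
  refine and_congr_right fun _ => ⟨fun h u v huv => ?_, fun h a b => ?_⟩
  · exact (h _ _).mp (by simpa using huv)
  · simpa using (h.lt_iff_lt (a := α a) (b := α b)).symm

end Occurrence

section Phi

variable {k m : ℕ} {α : Perm (Fin (k + 1))} {π : Perm (Fin m)}

lemma phi_castSucc (π : Perm (Fin m)) (i : Fin m) : phi π i.castSucc = (π i).succ := by
  simp [phi]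

lemma phi_last (π : Perm (Fin m)) : phi π (Fin.last m) = 0 := by
  simp [phi]

lemma mem_range_phi_iff {σ : Perm (Fin (m + 1))} : σ ∈ Set.range phi ↔ σ (Fin.last m) = 0 := by
  refine ⟨fun ⟨π, hπ⟩ => hπ ▸ phi_last π, fun h => ?_⟩
  have apply_ne_zero (i : Fin m) : σ i.castSucc ≠ 0 :=
    fun hi => i.castSucc_ne_last (σ.injective (hi.trans h.symm))
  have pred_injective : Function.Injective fun i => (σ i.castSucc).pred (apply_ne_zero i) :=
    fun i j hij => Fin.castSucc_injective m (σ.injective (Fin.pred_inj.mp hij))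
  refine ⟨Equiv.ofBijective _ (Finite.injective_iff_bijective.mp pred_injective),
    Equiv.ext fun i => ?_⟩
  cases i using Fin.lastCases with
  | last => rw [phi_last, h]
  | cast j => simp [phi_castSucc]

lemma isOccurrence_phi_castSucc_comp_iff {f : Fin (k + 1) → Fin m} :
    IsOccurrence α (phi π) (Fin.castSucc ∘ f) ↔ IsOccurrence α π f := by
  simp [IsOccurrence, StrictMono, phi_castSucc]

lemma IsOccurrence.ne_last_of_phi (hα : α (Fin.last k) ≠ 0) {f : Fin (k + 1) → Fin (m + 1)}
    (hf : IsOccurrence α (phi π) f) (a : Fin (k + 1)) : f a ≠ Fin.last m := by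
  intro ha
  have f_last : f (Fin.last k) = Fin.last m :=
    Fin.last_le_iff.mp (ha ▸ hf.1.monotone (Fin.le_last a))
  have bottom_lt : phi π (f (α.symm 0)) < phi π (f (Fin.last k)) := by
    rw [← hf.2, Equiv.apply_symm_apply]
    exact Fin.pos_iff_ne_zero.mpr hα
  rw [f_last, phi_last] at bottom_lt
  exact Fin.not_lt_zero _ bottom_lt

lemma occCount_phi (hα : α (Fin.last k) ≠ 0) (π : Perm (Fin m)) :
    occCount α (phi π) = occCount α π := by
  let shiftOcc : {f // IsOccurrence α π f} → {f // IsOccurrence α (phi π) f} :=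
    fun f => ⟨Fin.castSucc ∘ f, isOccurrence_phi_castSucc_comp_iff.mpr f.2⟩
  refine (Nat.card_congr (Equiv.ofBijective shiftOcc ⟨fun f g hfg => ?_, fun ⟨g, hg⟩ => ?_⟩)).symm
  · exact Subtype.ext ((Fin.castSucc_injective m).comp_left (congrArg Subtype.val hfg))
  · choose f hf using fun a => Fin.exists_castSucc_eq.mpr (hg.ne_last_of_phi hα a)
    obtain rfl : Fin.castSucc ∘ f = g := funext hf
    exact ⟨⟨f, isOccurrence_phi_castSucc_comp_iff.mp hg⟩, rfl⟩

lemma phi_mem_SnAvoidContain_iff {α β : Perm (Fin 3)} (hα : α 2 ≠ 0) (hβ : β 2 ≠ 0) :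
    phi π ∈ SnAvoidContain α β (m + 1) ↔ π ∈ SnAvoidContain α β m := by
  simp only [SnAvoidContain, Set.mem_ofPred_eq, avoids, containsOnce, occCount_phi hα,
    occCount_phi hβ]

end Phi

section Pattern

variable {n : ℕ} {π : Perm (Fin n)} {i j k : Fin n}

lemma isOccurrence_p123_iff {f : Fin 3 → Fin n} :
    IsOccurrence p123 π f ↔ f 0 < f 1 ∧ f 1 < f 2 ∧ π (f 0) < π (f 1) ∧ π (f 1) < π (f 2) := by
  simp [isOccurrence_iff_strictMono_comp_symm, Fin.strictMono_iff_lt_succ, Fin.forall_fin_two,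
    p123, Equiv.symm, and_assoc]

/-- The positions `i < j < k` carry an occurrence of `312` in `π`. -/
structure Is312 (π : Perm (Fin n)) (i j k : Fin n) : Prop where
  lt_mid : i < j
  mid_lt : j < k
  bottom_lt : π j < π k
  lt_top : π k < π i

lemma is312_iff : Is312 π i j k ↔ i < j ∧ j < k ∧ π j < π k ∧ π k < π i :=
  ⟨fun ⟨hij, hjk, hlt, hlt'⟩ => ⟨hij, hjk, hlt, hlt'⟩,
    fun ⟨hij, hjk, hlt, hlt'⟩ => ⟨hij, hjk, hlt, hlt'⟩⟩

/-- The positions `i < j < k` carry the only occurrence of `312` in `π`. -/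
structure IsUnique312 (π : Perm (Fin n)) (i j k : Fin n) : Prop extends Is312 π i j k where
  eq_of_is312 : ∀ {i' j' k'}, Is312 π i' j' k' → i' = i ∧ j' = j ∧ k' = k

lemma isOccurrence_p312_iff {f : Fin 3 → Fin n} :
    IsOccurrence p312 π f ↔ Is312 π (f 0) (f 1) (f 2) := by
  rw [is312_iff]
  simp [isOccurrence_iff_strictMono_comp_symm, Fin.strictMono_iff_lt_succ, Fin.forall_fin_two,
    p312, Equiv.symm, and_assoc]

lemma avoids_p123_iff :
    avoids p123 π ↔ ∀ i j k, i < j → j < k → π i < π j → ¬ π j < π k := by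
  simp only [avoids_iff_forall_not_isOccurrence, isOccurrence_p123_iff]
  exact ⟨fun h i j k hij hjk hlt hlt' => h ![i, j, k] ⟨hij, hjk, hlt, hlt'⟩,
    fun h f ⟨h01, h12, hlt, hlt'⟩ => h _ _ _ h01 h12 hlt hlt'⟩

lemma lt_of_avoids_p123 (h123 : avoids p123 π) (hij : i < j) (hjk : j < k) (hlt : π i < π j) :
    π k < π j :=
  (not_lt.mp (avoids_p123_iff.mp h123 i j k hij hjk hlt)).lt_of_ne (π.injective.ne hjk.ne')

lemma containsOnce_p312_iff : containsOnce p312 π ↔ ∃ a b c, IsUnique312 π a b c := by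
  simp only [containsOnce_iff_existsUnique_isOccurrence, ExistsUnique, isOccurrence_p312_iff]
  constructor
  · rintro ⟨f, hf, huniq⟩
    refine ⟨f 0, f 1, f 2, hf, fun {i j k} h => ?_⟩
    simp [← huniq ![i, j, k] h]
  · rintro ⟨a, b, c, h⟩
    refine ⟨![a, b, c], h.toIs312, fun f hf => ?_⟩
    obtain ⟨h0, h1, h2⟩ := h.eq_of_is312 hf
    ext x
    fin_cases x <;> simp [h0, h1, h2]

end Pattern

section Word

variable {n : ℕ} {σ : Perm (Fin n)} {w : ℕ → ℕ}

lemma hasWord.lt_iff_lt (h : hasWord σ w) {i j : Fin n} : σ i < σ j ↔ w (i + 1) < w (j + 1) := by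
  rw [← h i, ← h j, Nat.add_lt_add_iff_right, Fin.lt_def]

lemma hasWord_of_forall_lt_of_eq_add_one (hw : ∀ v : Fin n, ∃ i : Fin n, w (i + 1) = v + 1)
    (hlt : ∀ i j : Fin n, w (j + 1) = w (i + 1) + 1 → σ i < σ j) : hasWord σ w := by
  choose p hp using hw
  have apply_pos_strictMono : StrictMono (σ ∘ p) := by
    cases n with
    | zero => exact Subsingleton.strictMono _
    | succ n => exact Fin.strictMono_iff_lt_succ.mpr fun v => hlt _ _ (by simp [hp])
  intro i
  have pos_apply : p (σ i) = i := σ.injective apply_pos_strictMono.apply_eq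
  rw [← hp (σ i), pos_apply]

end Word

section ExtremalWords

variable {m : ℕ} {σ : Perm (Fin (m + 1))} {a b c i j : Fin (m + 1)}

/-- The word `3 1 n (n-1) ⋯ 5 4 2` with `n = m + 1`, as a function of the 1-indexed position. -/
def decSuffixWord (m j : ℕ) : ℕ :=
  if j = 1 then 3 else if j = 2 then 1 else if j = m + 1 then 2 else m + 4 - j

/-- The word `(n-2) (n-3) ⋯ 3 2 n 1 (n-1)` with `n = m + 1`, as a function of the 1-indexed
position. -/
def decPrefixWord (m j : ℕ) : ℕ :=
  if j = m - 1 then m + 1 else if j = m then 1 else if j = m + 1 then m else m - j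

lemma ascent_of_hasWord_decSuffixWord (h : hasWord σ (decSuffixWord m)) (hij : i < j)
    (hlt : σ i < σ j) : (i : ℕ) ≤ 1 ∧ 2 ≤ (j : ℕ) := by
  have word_lt := h.lt_iff_lt.mp hlt
  grind [decSuffixWord]

lemma avoids_p123_of_hasWord_decSuffixWord (h : hasWord σ (decSuffixWord m)) :
    avoids p123 σ := by
  refine avoids_p123_iff.mpr fun i j k hij hjk hlt hlt' => ?_
  have ascent_left := ascent_of_hasWord_decSuffixWord h hij hlt
  have ascent_right := ascent_of_hasWord_decSuffixWord h hjk hlt'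
  omega

lemma isUnique312_of_hasWord_decSuffixWord (hm : 2 ≤ m) (h : hasWord σ (decSuffixWord m))
    (ha : (a : ℕ) = 0) (hb : (b : ℕ) = 1) (hc : (c : ℕ) = m) : IsUnique312 σ a b c := by
  refine ⟨⟨by omega, by omega, ?_, ?_⟩, fun {i j k} hocc => ?_⟩
  · rw [h.lt_iff_lt]
    grind [decSuffixWord]
  · rw [h.lt_iff_lt]
    grind [decSuffixWord]
  · have ascent := ascent_of_hasWord_decSuffixWord h hocc.mid_lt hocc.bottom_lt
    have i_lt_j := Fin.lt_def.mp hocc.lt_mid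
    have word_lt := h.lt_iff_lt.mp hocc.lt_top
    have i_eq : (i : ℕ) = 0 := by omega
    have k_eq : (k : ℕ) = m := by grind [decSuffixWord]
    omega

lemma ascent_of_hasWord_decPrefixWord (h : hasWord σ (decPrefixWord m)) (hij : i < j)
    (hlt : σ i < σ j) :
    ((i : ℕ) + 2 < m ∨ (i : ℕ) + 1 = m) ∧ ((j : ℕ) + 2 = m ∨ (j : ℕ) = m) := by
  have word_lt := h.lt_iff_lt.mp hlt
  grind [decPrefixWord]

lemma avoids_p123_of_hasWord_decPrefixWord (h : hasWord σ (decPrefixWord m)) :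
    avoids p123 σ := by
  refine avoids_p123_iff.mpr fun i j k hij hjk hlt hlt' => ?_
  have ascent_left := ascent_of_hasWord_decPrefixWord h hij hlt
  have ascent_right := ascent_of_hasWord_decPrefixWord h hjk hlt'
  omega

lemma isUnique312_of_hasWord_decPrefixWord (h : hasWord σ (decPrefixWord m))
    (ha : (a : ℕ) + 2 = m) (hb : (b : ℕ) + 1 = m) (hc : (c : ℕ) = m) : IsUnique312 σ a b c := by
  refine ⟨⟨by omega, by omega, ?_, ?_⟩, fun {i j k} hocc => ?_⟩
  · rw [h.lt_iff_lt]
    grind [decPrefixWord]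
  · rw [h.lt_iff_lt]
    grind [decPrefixWord]
  · have ascent := ascent_of_hasWord_decPrefixWord h hocc.mid_lt hocc.bottom_lt
    have i_lt_j := Fin.lt_def.mp hocc.lt_mid
    have word_lt := h.lt_iff_lt.mp hocc.lt_top
    have k_eq : (k : ℕ) = m := by grind [decPrefixWord]
    have i_eq : (i : ℕ) + 2 = m := by grind [decPrefixWord]
    omega

lemma mem_SnAvoidContain_of_hasWord_decSuffixWord (hm : 2 ≤ m) (h : hasWord σ (decSuffixWord m)) :
    σ ∈ SnAvoidContain p123 p312 (m + 1) :=
  ⟨avoids_p123_of_hasWord_decSuffixWord h, containsOnce_p312_iff.mpr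
    ⟨⟨0, by omega⟩, ⟨1, by omega⟩, ⟨m, by omega⟩,
      isUnique312_of_hasWord_decSuffixWord hm h rfl rfl rfl⟩⟩

lemma mem_SnAvoidContain_of_hasWord_decPrefixWord (hm : 2 ≤ m) (h : hasWord σ (decPrefixWord m)) :
    σ ∈ SnAvoidContain p123 p312 (m + 1) :=
  ⟨avoids_p123_of_hasWord_decPrefixWord h, containsOnce_p312_iff.mpr
    ⟨⟨m - 2, by omega⟩, ⟨m - 1, by omega⟩, ⟨m, by omega⟩,
      isUnique312_of_hasWord_decPrefixWord h (by dsimp only; omega) (by dsimp only; omega) rfl⟩⟩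

end ExtremalWords

section Structure

variable {m : ℕ} {σ : Perm (Fin (m + 1))} {a b c i j : Fin (m + 1)}

lemma lt_of_apply_eq_zero (hb : σ b = 0) (hi : i ≠ b) : σ b < σ i :=
  hb ▸ Fin.pos_iff_ne_zero.mpr fun hi0 => hi (σ.injective (hi0.trans hb.symm))

lemma lt_of_avoids_p123_of_apply_eq_zero (h123 : avoids p123 σ) (hb : σ b = 0)
    (hbi : b < i) (hij : i < j) : σ j < σ i :=
  lt_of_avoids_p123 h123 hbi hij (lt_of_apply_eq_zero hb hbi.ne')

namespace IsUnique312

lemma apply_mid_eq_zero (h123 : avoids p123 σ) (h : IsUnique312 σ a b c)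
    (hlast : σ (Fin.last m) ≠ 0) : σ b = 0 := by
  obtain ⟨p, hp⟩ := σ.surjective 0
  have p_lt_last : p < Fin.last m := Fin.lt_last_iff_ne_last.mpr fun hpl => hlast (hpl ▸ hp)
  suffices b = p from this ▸ hp
  rcases lt_trichotomy b p with hbp | hbp | hpb
  · rcases lt_trichotomy c p with hcp | rfl | hpc
    · have last_lt : σ (Fin.last m) < σ c :=
        lt_of_avoids_p123 h123 h.mid_lt (hcp.trans p_lt_last) h.bottom_lt
      exact (h.eq_of_is312
        ⟨hcp, p_lt_last, lt_of_apply_eq_zero hp p_lt_last.ne', last_lt⟩).2.1.symm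
    · exact absurd (hp ▸ h.bottom_lt) (Fin.not_lt_zero _)
    · exact (h.eq_of_is312
        ⟨h.lt_mid.trans hbp, hpc, lt_of_apply_eq_zero hp hpc.ne', h.lt_top⟩).2.1.symm
  · exact hbp
  · exact absurd h.bottom_lt
      (lt_of_avoids_p123_of_apply_eq_zero h123 hp hpb h.mid_lt).not_gt

lemma right_eq_last (h123 : avoids p123 σ) (h : IsUnique312 σ a b c) (hb : σ b = 0) :
    c = Fin.last m := by
  by_contra hc
  have c_lt_last : c < Fin.last m := Fin.lt_last_iff_ne_last.mpr hc
  have b_lt_last : b < Fin.last m := h.mid_lt.trans c_lt_last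
  have last_lt : σ (Fin.last m) < σ c :=
    lt_of_avoids_p123_of_apply_eq_zero h123 hb h.mid_lt c_lt_last
  exact hc (h.eq_of_is312 ⟨h.lt_mid, b_lt_last, lt_of_apply_eq_zero hb b_lt_last.ne',
    last_lt.trans h.lt_top⟩).2.2.symm

lemma lt_of_lt_mid_of_mid_lt (h : IsUnique312 σ a b c) (hb : σ b = 0) (hib : i < b) (hbj : b < j)
    (hne : ¬ (i = a ∧ j = c)) : σ i < σ j := by
  by_contra! hle
  have lt_top : σ j < σ i := hle.lt_of_ne (σ.injective.ne (hib.trans hbj).ne')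
  obtain ⟨hia, -, hjc⟩ := h.eq_of_is312 ⟨hib, hbj, lt_of_apply_eq_zero hb hbj.ne', lt_top⟩
  exact hne ⟨hia, hjc⟩

lemma le_left_of_lt_mid (h : IsUnique312 σ a b c) (hb : σ b = 0) (hib : i < b) : i ≤ a := by
  by_contra! hai
  have lt_right : σ i < σ c :=
    h.lt_of_lt_mid_of_mid_lt hb hib h.mid_lt fun hia => hai.ne' hia.1
  exact hib.ne (h.eq_of_is312 ⟨hai, hib.trans h.mid_lt, lt_right, h.lt_top⟩).2.1

lemma left_add_one_eq_mid (h : IsUnique312 σ a b c) (hb : σ b = 0) : (a : ℕ) + 1 = b := by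
  have a_lt_b := Fin.lt_def.mp h.lt_mid
  have pred_le : (b : ℕ) - 1 ≤ a :=
    h.le_left_of_lt_mid hb (i := ⟨b - 1, by omega⟩) (Fin.lt_def.mpr (by dsimp only; omega))
  omega

lemma lt_right_of_lt_left (h : IsUnique312 σ a b c) (hb : σ b = 0) (hia : i < a) : σ i < σ c :=
  h.lt_of_lt_mid_of_mid_lt hb (hia.trans h.lt_mid) h.mid_lt fun hi => hia.ne hi.1

lemma lt_of_lt_left (h123 : avoids p123 σ) (h : IsUnique312 σ a b c) (hb : σ b = 0)
    (hij : i < j) (hja : j < a) : σ j < σ i := by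
  by_contra! hle
  have ascent : σ i < σ j := hle.lt_of_ne (σ.injective.ne hij.ne)
  have a_lt_j : σ a < σ j := lt_of_avoids_p123 h123 hij hja ascent
  exact a_lt_j.not_gt ((h.lt_right_of_lt_left hb hja).trans h.lt_top)

lemma left_eq_zero (h123 : avoids p123 σ) (h : IsUnique312 σ a b c) (hb : σ b = 0)
    (hbj : b < j) (hjc : j < c) : a = 0 := by
  by_contra ha
  have zero_lt_a : 0 < a := Fin.pos_iff_ne_zero.mpr ha
  have a_lt_j : σ a < σ j := h.lt_of_lt_mid_of_mid_lt hb h.lt_mid hbj fun hj => hjc.ne hj.2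
  have j_lt_a : σ j < σ a := lt_of_avoids_p123 h123 zero_lt_a (h.lt_mid.trans hbj)
    ((h.lt_right_of_lt_left hb zero_lt_a).trans h.lt_top)
  exact a_lt_j.not_gt j_lt_a

lemma hasWord_decSuffixWord (h123 : avoids p123 σ) (h : IsUnique312 σ a b c) (hb : σ b = 0)
    (ha : (a : ℕ) = 0) : hasWord σ (decSuffixWord m) := by
  have b_eq := h.left_add_one_eq_mid hb
  have c_eq : (c : ℕ) = m := congrArg Fin.val (h.right_eq_last h123 hb)
  have b_lt_c := Fin.lt_def.mp h.mid_lt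
  refine hasWord_of_forall_lt_of_eq_add_one (fun v => ?_) fun i j hij => ?_
  · obtain hv | hv | hv | hv : (v : ℕ) = 0 ∨ (v : ℕ) = 1 ∨ (v : ℕ) = 2 ∨ 3 ≤ (v : ℕ) := by omega
    · exact ⟨b, by grind [decSuffixWord]⟩
    · exact ⟨c, by grind [decSuffixWord]⟩
    · exact ⟨a, by grind [decSuffixWord]⟩
    · exact ⟨⟨m + 2 - v, by omega⟩, by grind [decSuffixWord]⟩
  · obtain ⟨rfl, hj⟩ | ⟨rfl, rfl⟩ | ⟨rfl, hbj, hjc⟩ | ⟨hbj, hji⟩ :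
        (i = b ∧ j ≠ b) ∨ (i = c ∧ j = a) ∨ (i = a ∧ b < j ∧ j < c) ∨ (b < j ∧ j < i) := by
      grind [decSuffixWord]
    · exact lt_of_apply_eq_zero hb hj
    · exact h.lt_top
    · exact h.lt_of_lt_mid_of_mid_lt hb h.lt_mid hbj fun hj => hjc.ne hj.2
    · exact lt_of_avoids_p123_of_apply_eq_zero h123 hb hbj hji

lemma hasWord_decPrefixWord (h123 : avoids p123 σ) (h : IsUnique312 σ a b c) (hb : σ b = 0)
    (hbc : (b : ℕ) + 1 = c) : hasWord σ (decPrefixWord m) := by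
  have b_eq := h.left_add_one_eq_mid hb
  have c_eq : (c : ℕ) = m := congrArg Fin.val (h.right_eq_last h123 hb)
  refine hasWord_of_forall_lt_of_eq_add_one (fun v => ?_) fun i j hij => ?_
  · obtain hv | hv | hv | hv : (v : ℕ) = 0 ∨ (v : ℕ) = m ∨ (v : ℕ) + 1 = m ∨
        0 < (v : ℕ) ∧ (v : ℕ) + 1 < m := by omega
    · exact ⟨b, by grind [decPrefixWord]⟩
    · exact ⟨a, by grind [decPrefixWord]⟩
    · exact ⟨c, by grind [decPrefixWord]⟩
    · exact ⟨⟨m - 2 - v, by omega⟩, by grind [decPrefixWord]⟩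
  · obtain ⟨rfl, hj⟩ | ⟨rfl, rfl⟩ | ⟨hia, rfl⟩ | ⟨hji, hia⟩ :
        (i = b ∧ j ≠ b) ∨ (i = c ∧ j = a) ∨ (i < a ∧ j = c) ∨ (j < i ∧ i < a) := by
      grind [decPrefixWord]
    · exact lt_of_apply_eq_zero hb hj
    · exact h.lt_top
    · exact h.lt_right_of_lt_left hb hia
    · exact h.lt_of_lt_left h123 hb hji hia

end IsUnique312

lemma hasWord_of_apply_last_ne_zero (h123 : avoids p123 σ) (h312 : containsOnce p312 σ)
    (hlast : σ (Fin.last m) ≠ 0) : hasWord σ (decSuffixWord m) ∨ hasWord σ (decPrefixWord m) := by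
  obtain ⟨a, b, c, h⟩ := containsOnce_p312_iff.mp h312
  have hb : σ b = 0 := h.apply_mid_eq_zero h123 hlast
  have b_lt_c := Fin.lt_def.mp h.mid_lt
  rcases (Nat.succ_le_of_lt b_lt_c).eq_or_lt with hbc | hgap
  · exact .inr (h.hasWord_decPrefixWord h123 hb hbc)
  · have ha : a = 0 := h.left_eq_zero h123 hb (j := ⟨b + 1, by omega⟩)
      (Fin.lt_def.mpr (Nat.lt_succ_self _)) (Fin.lt_def.mpr hgap)
    exact .inl (h.hasWord_decSuffixWord h123 hb (congrArg Fin.val ha))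

end Structure

/-- Generating rule for `S_n(123;312)`, `n = m+1 ≥ 4`:
`S_n(123;312) = φ(S_{n−1}(123;312)) ∪ {3 1 n (n−1) ⋯ 5 4 2, (n−2)(n−3) ⋯ 3 2 n 1 (n−1)}`. -/
theorem generating_rule_123_312 :
    ∀ m : ℕ, 4 ≤ m + 1 →
      SnAvoidContain p123 p312 (m + 1) =
        phi '' SnAvoidContain p123 p312 m ∪
          {σ | hasWord σ (fun j =>
            if j = 1 then 3 else if j = 2 then 1
            else if j = m + 1 then 2 else m + 4 - j)} ∪
          {σ | hasWord σ (fun j =>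
            if j = m - 1 then m + 1 else if j = m then 1
            else if j = m + 1 then m else m - j)} := by
  intro m hm
  refine Set.Subset.antisymm (fun σ hσ => ?_) ?_
  · by_cases hlast : σ (Fin.last m) = 0
    · obtain ⟨π, rfl⟩ := mem_range_phi_iff.mpr hlast
      exact .inl (.inl ⟨π, (phi_mem_SnAvoidContain_iff (by decide) (by decide)).mp hσ, rfl⟩)
    · rcases hasWord_of_apply_last_ne_zero hσ.1 hσ.2 hlast with hword | hword
      · exact .inl (.inr hword)
      · exact .inr hword
  · rintro σ ((⟨π, hπ, rfl⟩ | hword) | hword)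
    · exact (phi_mem_SnAvoidContain_iff (by decide) (by decide)).mpr hπ
    · exact mem_SnAvoidContain_of_hasWord_decSuffixWord (by omega) hword
    · exact mem_SnAvoidContain_of_hasWord_decPrefixWord (by omega) hword
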